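/- For every γ ∈ (1,2) and every N ≥ 1, with P_γ = Q_γ·τ(Â_γ), the matrix P_γ is symmetric positive definite, for every nonzero y ∈ ℝ^N one has (3/8)·yᵀ P_γ y < yᵀ A_γ y < 2·yᵀ P_γ y, and every eigenvalue λ of P_γ^{−1} A_γ satisfies 3/8 < λ < 2. -/

import Mathlib

open Matrix

/-- The fourth-order coefficients `s_k^{(γ)}`. -/
noncomputable def sCoef (γ : ℝ) (k : ℤ) : ℝ :=
  ((-1 : ℝ) ^ k * Real.Gamma (γ + 1) /
      (Real.Gamma (γ / 2 - k + 1) * Real.Gamma (γ / 2 + k + 1))) *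
    (1 + γ * (γ + 1) * (γ + 2) / (6 * (γ - 2 * k + 2) * (γ + 2 * k + 2)))

/-- `A_γ`: the symmetric Toeplitz matrix with `(i,j)` entry `s_{i-j}^{(γ)}`. -/
noncomputable def Amat (γ : ℝ) (N : ℕ) : Matrix (Fin N) (Fin N) ℝ :=
  fun i j => sCoef γ ((i : ℤ) - (j : ℤ))

/-- The second-order coefficients `g_k^{(γ)}`. -/
noncomputable def gCoef (γ : ℝ) (k : ℤ) : ℝ :=
  (-1 : ℝ) ^ k * Real.Gamma (γ + 1) /
    (Real.Gamma (γ / 2 - k + 1) * Real.Gamma (γ / 2 + k + 1))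

/-- `Â_γ`: the symmetric Toeplitz matrix with `(i,j)` entry `g_{i-j}^{(γ)}`. -/
noncomputable def Ahat (γ : ℝ) (N : ℕ) : Matrix (Fin N) (Fin N) ℝ :=
  fun i j => gCoef γ ((i : ℤ) - (j : ℤ))

/-- τ part of the symmetric Toeplitz matrix with first column `t 0, …, t (N-1)`:
with 1-based indices `i, j ∈ {1,…,N}` (here `i.val + 1`, `j.val + 1`) and the
convention `t m = 0` for `m ≥ N`, the `(i,j)` entry is
`t |i-j| - t (i+j) - t (2(N+1)-i-j)`. -/
noncomputable def tauOf (N : ℕ) (t : ℕ → ℝ) : Matrix (Fin N) (Fin N) ℝ :=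
  fun i j =>
    (fun m => if m < N then t m else 0) ((i : ℤ) - (j : ℤ)).natAbs -
    (fun m => if m < N then t m else 0) (((i : ℕ) + 1) + ((j : ℕ) + 1)) -
    (fun m => if m < N then t m else 0) (2 * (N + 1) - ((i : ℕ) + 1) - ((j : ℕ) + 1))

/-- `τ(Â_γ)`. -/
noncomputable def tauAhat (γ : ℝ) (N : ℕ) : Matrix (Fin N) (Fin N) ℝ :=
  tauOf N (fun m => gCoef γ (m : ℤ))

/-- The tridiagonal matrix with `2` on the diagonal and `-1` on the sub/superdiagonals. -/
def triDiag (N : ℕ) : Matrix (Fin N) (Fin N) ℝ :=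
  fun i j =>
    if (i : ℤ) = (j : ℤ) then 2
    else if ((i : ℤ) - (j : ℤ)).natAbs = 1 then -1 else 0

/-- `Q_γ = I_N + (γ/24)·T_N`. -/
noncomputable def Qmat (γ : ℝ) (N : ℕ) : Matrix (Fin N) (Fin N) ℝ :=
  1 + (γ / 24) • triDiag N

/-- `P_γ = Q_γ · τ(Â_γ)`. -/
noncomputable def Pmat (γ : ℝ) (N : ℕ) : Matrix (Fin N) (Fin N) ℝ :=
  Qmat γ N * tauAhat γ N

/-!
Write `Â = toeplitz N g` and `τ = Â - H`. The sequence `g` is even, nonpositive and increasing away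
from `0`, and has positive symmetric partial sums. For such a sequence every matrix `Â + c H` with
`-3 ≤ c ≤ 1` is strictly diagonally dominant; `c = 1` and `c = -3` give `(1/2) τ < Â < (3/2) τ`. The
matrix `T` commutes with `τ` and `0 ≤ T ≤ 4`, so `τ ≤ P ≤ (1 + γ/6) τ`.

On the other side `s = g + (γ/24) δ g` with the negated second difference `δ`, whose symbol
`2 - 2 cos θ` also lies in `[0, 4]`, so `Â ≤ A ≤ (1 + γ/6) Â`. Hence `A` lies between
`P / (2 (1 + γ/6))` and `(3/2) (1 + γ/6) P`, and `1 + γ/6 < 4/3`.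
-/

/-! ### Positive definite matrices -/

section PosDef

open scoped ComplexOrder

variable {n : Type*} [Fintype n]

theorem posDef_of_sum_row_lt_diag {𝕜 : Type*} [RCLike 𝕜] [DecidableEq n] {A : Matrix n n 𝕜}
    (hA : A.IsHermitian) (h : ∀ i, ∑ j ∈ Finset.univ.erase i, ‖A i j‖ < RCLike.re (A i i)) :
    A.PosDef := by
  refine hA.posDef_iff_eigenvalues_pos.mpr fun k ↦ ?_
  have hk : Module.End.HasEigenvalue (toLin' A) (hA.eigenvalues k : 𝕜) :=
    Module.End.hasEigenvalue_of_hasEigenvector (x := ⇑(hA.eigenvectorBasis k))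
      ⟨Module.End.mem_eigenspace_iff.mpr <| by
        rw [toLin'_apply, hA.mulVec_eigenvectorBasis, RCLike.real_smul_eq_coe_smul (K := 𝕜)],
        by simpa using hA.eigenvectorBasis.toBasis.ne_zero k⟩
  obtain ⟨i, hi⟩ := eigenvalue_mem_ball hk
  rw [mem_closedBall_iff_norm'] at hi
  have hre := (RCLike.re_le_norm _).trans hi
  rw [map_sub, RCLike.ofReal_re] at hre
  linarith [h i]

open scoped MatrixOrder in
theorem posSemidef_mul_of_commute {𝕜 : Type*} [RCLike 𝕜] {A B : Matrix n n 𝕜}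
    (hA : A.PosSemidef) (hB : B.PosSemidef) (hAB : Commute A B) : (A * B).PosSemidef := by
  classical exact (hAB.mul_nonneg hA.nonneg hB.nonneg).posSemidef

theorem dotProduct_mulVec_lt_of_posDef_sub {A B : Matrix n n ℝ} (h : (B - A).PosDef)
    {y : n → ℝ} (hy : y ≠ 0) : y ⬝ᵥ A *ᵥ y < y ⬝ᵥ B *ᵥ y := by
  simpa [sub_mulVec] using h.dotProduct_mulVec_pos hy

theorem eigenvalue_inv_mul_mem_Ioo [DecidableEq n] {A P : Matrix n n ℝ} (hP : P.PosDef)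
    {a b μ : ℝ} {v : n → ℝ} (hv : v ≠ 0) (hμ : (P⁻¹ * A) *ᵥ v = μ • v)
    (ha : a * (v ⬝ᵥ P *ᵥ v) < v ⬝ᵥ A *ᵥ v) (hb : v ⬝ᵥ A *ᵥ v < b * (v ⬝ᵥ P *ᵥ v)) :
    μ ∈ Set.Ioo a b := by
  have hA : A *ᵥ v = μ • P *ᵥ v := by
    rw [← mulVec_smul, ← hμ, mulVec_mulVec, mul_nonsing_inv_cancel_left _ _ hP.det_pos.ne'.isUnit]
  have hPv : 0 < v ⬝ᵥ P *ᵥ v := by simpa using hP.dotProduct_mulVec_pos hv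
  rw [hA, dotProduct_smul, smul_eq_mul] at ha hb
  exact ⟨lt_of_mul_lt_mul_right ha hPv.le, lt_of_mul_lt_mul_right hb hPv.le⟩

end PosDef

/-! ### Toeplitz matrices and second differences -/

/-- The `N × N` Toeplitz matrix `(t (i - j))` of a two-sided sequence `t`. -/
def toeplitz (N : ℕ) (t : ℤ → ℝ) : Matrix (Fin N) (Fin N) ℝ :=
  .of fun i j ↦ t ((i : ℤ) - j)

/-- The negated second central difference, the stencil `(-1, 2, -1)` applied to `t`. -/
def secondDiff (t : ℤ → ℝ) : ℤ → ℝ :=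
  fun k ↦ 2 * t k - t (k - 1) - t (k + 1)

/-- The rectangular bidiagonal matrix `(δ_{k,i} + e δ_{k,i+1})`. Congruence by it with `e = -1`
and `e = 1` realises the symbols `|1 ∓ exp(iθ)|²`, that is `2 ∓ 2 cos θ`, on Toeplitz matrices. -/
def bidiag (N : ℕ) (e : ℝ) : Matrix (Fin (N + 1)) (Fin N) ℝ :=
  .of fun k i ↦ (if k = i.castSucc then 1 else 0) + e * (if k = i.succ then 1 else 0)

section Toeplitz

variable {N : ℕ} {t : ℤ → ℝ}

theorem toeplitz_add_smul (N : ℕ) (t u : ℤ → ℝ) (c : ℝ) :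
    toeplitz N (t + c • u) = toeplitz N t + c • toeplitz N u :=
  rfl

theorem isSymm_toeplitz (ht : t.Even) (N : ℕ) : (toeplitz N t).IsSymm := by
  ext i j
  simp only [transpose_apply, toeplitz, of_apply]
  rw [← ht, neg_sub]

theorem even_secondDiff (ht : t.Even) : (secondDiff t).Even := by
  intro k
  simp only [secondDiff]
  rw [ht, ← ht (-k - 1), ← ht (-k + 1), show -(-k - 1) = k + 1 by ring,
    show -(-k + 1) = k - 1 by ring]
  ring

theorem bidiag_transpose_mul_toeplitz_mul_bidiag (N : ℕ) (e : ℝ) (t : ℤ → ℝ) :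
    (bidiag N e)ᵀ * toeplitz (N + 1) t * bidiag N e =
      toeplitz N fun k ↦ (1 + e ^ 2) * t k + e * (t (k - 1) + t (k + 1)) := by
  ext i j
  simp only [mul_apply, transpose_apply, bidiag, toeplitz, of_apply, mul_add, add_mul,
    Finset.sum_add_distrib, ite_mul, mul_ite, mul_one, mul_zero, zero_mul, one_mul,
    Finset.sum_ite_eq', Finset.mem_univ, if_true, Fin.val_castSucc, Fin.val_succ]
  push_cast
  rw [show (i : ℤ) + 1 - (j + 1) = i - j by ring, show (i : ℤ) + 1 - j = i - j + 1 by ring,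
    show (i : ℤ) - (j + 1) = i - j - 1 by ring]
  ring

theorem posSemidef_toeplitz_bidiag (h : (toeplitz (N + 1) t).PosSemidef) (e : ℝ) :
    (toeplitz N fun k ↦ (1 + e ^ 2) * t k + e * (t (k - 1) + t (k + 1))).PosSemidef := by
  rw [← bidiag_transpose_mul_toeplitz_mul_bidiag, ← conjTranspose_eq_transpose_of_trivial]
  exact h.conjTranspose_mul_mul_same _

theorem posSemidef_toeplitz_secondDiff (h : (toeplitz (N + 1) t).PosSemidef) :
    (toeplitz N (secondDiff t)).PosSemidef := by
  convert posSemidef_toeplitz_bidiag h (-1) using 2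
  ext k
  simp only [secondDiff]
  ring

theorem posSemidef_four_smul_toeplitz_sub_secondDiff (h : (toeplitz (N + 1) t).PosSemidef) :
    ((4 : ℝ) • toeplitz N t - toeplitz N (secondDiff t)).PosSemidef := by
  convert posSemidef_toeplitz_bidiag h 1 using 1
  ext i j
  simp only [toeplitz, secondDiff, Matrix.sub_apply, Matrix.smul_apply, of_apply, smul_eq_mul]
  ring

end Toeplitz

theorem toeplitz_single_zero (N : ℕ) : toeplitz N (Pi.single 0 1) = 1 := by
  ext i j
  simp [toeplitz, Pi.single_apply, one_apply, sub_eq_zero, Fin.ext_iff]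

theorem triDiag_eq_toeplitz (N : ℕ) : triDiag N = toeplitz N (secondDiff (Pi.single 0 1)) := by
  ext i j
  simp only [triDiag, toeplitz, secondDiff, of_apply, Pi.single_apply]
  grind

theorem posSemidef_triDiag (N : ℕ) : (triDiag N).PosSemidef := by
  rw [triDiag_eq_toeplitz]
  exact posSemidef_toeplitz_secondDiff (toeplitz_single_zero (N + 1) ▸ PosSemidef.one)

theorem posSemidef_four_sub_triDiag (N : ℕ) : ((4 : ℝ) • 1 - triDiag N).PosSemidef := by
  rw [triDiag_eq_toeplitz, ← toeplitz_single_zero]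
  exact posSemidef_four_smul_toeplitz_sub_secondDiff
    (toeplitz_single_zero (N + 1) ▸ PosSemidef.one)

theorem sum_fin_ite_intCast_eq {N : ℕ} {x : ℤ → ℝ} (hx_left : x (-1) = 0) (hx_right : x N = 0)
    {m : ℤ} (hm : m ∈ Set.Icc (-1) (N : ℤ)) :
    ∑ k : Fin N, (if (k : ℤ) = m then x k else 0) = x m := by
  by_cases hmN : 0 ≤ m ∧ m < N
  · lift m to ℕ using hmN.1
    lift m to Fin N using by exact_mod_cast hmN.2
    simp [← Fin.ext_iff]
  · have hm0 : x m = 0 := by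
      obtain rfl | rfl : m = -1 ∨ m = N := by grind
      exacts [hx_left, hx_right]
    rw [hm0]
    exact Finset.sum_eq_zero fun k _ ↦ if_neg (by grind)

theorem sum_triDiag_mul {N : ℕ} {x : ℤ → ℝ} (hx_left : x (-1) = 0) (hx_right : x N = 0)
    (i : Fin N) : ∑ k : Fin N, triDiag N i k * x k = secondDiff x i := by
  have hterm (k : Fin N) : triDiag N i k * x k =
      2 * (if (k : ℤ) = i then x k else 0) - (if (k : ℤ) = i - 1 then x k else 0) -
        (if (k : ℤ) = i + 1 then x k else 0) := by
    simp only [triDiag]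
    grind
  simp only [hterm, Finset.sum_sub_distrib, ← Finset.mul_sum]
  rw [sum_fin_ite_intCast_eq hx_left hx_right (by grind),
    sum_fin_ite_intCast_eq hx_left hx_right (by grind),
    sum_fin_ite_intCast_eq hx_left hx_right (by grind), secondDiff]

/-! ### The τ algebra -/

/-- The Hankel correction in `τ(T) = T - H`, with indices counted from `0`. -/
def hankelPart (N : ℕ) (u : ℤ → ℝ) : Matrix (Fin N) (Fin N) ℝ :=
  .of fun i j ↦ u ((i : ℤ) + j + 2) + u (2 * N - i - j)

/-- The restriction of `t` to the band `|k| < N`, the only part of `t` seen by `tauOf N`. -/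
def truncate (N : ℕ) (t : ℤ → ℝ) : ℤ → ℝ :=
  fun k ↦ if |k| < N then t k else 0

section Tau

variable {N : ℕ} {t u : ℤ → ℝ}

theorem even_truncate (ht : t.Even) (N : ℕ) : (truncate N t).Even := by
  intro k
  simp only [truncate, abs_neg, ht k]

theorem truncate_of_le {k : ℤ} (hk : N ≤ k) : truncate N t k = 0 :=
  if_neg (by grind)

theorem toeplitz_truncate (N : ℕ) (t : ℤ → ℝ) : toeplitz N (truncate N t) = toeplitz N t := by
  ext i j
  exact if_pos (by grind)

theorem isSymm_hankelPart (N : ℕ) (u : ℤ → ℝ) : (hankelPart N u).IsSymm := by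
  ext i j
  simp only [transpose_apply, hankelPart, of_apply]
  congr 2 <;> ring

theorem tauOf_eq_toeplitz_sub_hankelPart (ht : t.Even) (N : ℕ) :
    tauOf N (fun m ↦ t m) = toeplitz N t - hankelPart N (truncate N t) := by
  have hcast (m : ℕ) : (if m < N then t m else 0) = truncate N t m := by
    simp [truncate]
  have hcast_natAbs (k : ℤ) : truncate N t k.natAbs = truncate N t k := by
    rcases k.natAbs_eq with hk | hk
    · rw [← hk]
    · rw [← even_truncate ht N, ← hk]
  ext i j
  rw [← toeplitz_truncate]
  simp only [tauOf, hcast, hcast_natAbs, toeplitz, hankelPart, Matrix.sub_apply, of_apply, sub_sub]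
  congr 3 <;> grind

theorem triDiag_mul_toeplitz_sub_hankelPart (hu : u.Even) (hu_zero : ∀ k : ℤ, N ≤ k → u k = 0) :
    triDiag N * (toeplitz N u - hankelPart N u) =
      toeplitz N (secondDiff u) - hankelPart N (secondDiff u) := by
  ext i j
  let x (m : ℤ) : ℝ := u (m - j) - (u (m + j + 2) + u (2 * N - m - j))
  have hx_left : x (-1) = 0 := by
    simp only [x]
    rw [hu_zero (2 * N - -1 - j) (by grind), ← hu, show -(-1 - (j : ℤ)) = -1 + j + 2 by ring]
    ring
  have hx_right : x N = 0 := by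
    simp only [x]
    rw [hu_zero (N + j + 2) (by grind), show 2 * (N : ℤ) - N - j = N - j by ring]
    ring
  have hentry : (triDiag N * (toeplitz N u - hankelPart N u)) i j = secondDiff x i :=
    sum_triDiag_mul hx_left hx_right i
  rw [hentry]
  simp only [x, secondDiff, toeplitz, hankelPart, Matrix.sub_apply, of_apply]
  ring_nf

theorem isSymm_tauOf (ht : t.Even) (N : ℕ) : (tauOf N fun m ↦ t m).IsSymm := by
  rw [tauOf_eq_toeplitz_sub_hankelPart ht]
  exact (isSymm_toeplitz ht N).sub (isSymm_hankelPart N _)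

theorem commute_triDiag_tauOf (ht : t.Even) (N : ℕ) :
    Commute (triDiag N) (tauOf N fun m ↦ t m) := by
  have hsymm : (triDiag N * tauOf N fun m ↦ t m).IsSymm := by
    have hu := even_truncate ht N
    rw [tauOf_eq_toeplitz_sub_hankelPart ht, ← toeplitz_truncate,
      triDiag_mul_toeplitz_sub_hankelPart hu fun k ↦ truncate_of_le]
    exact (isSymm_toeplitz (even_secondDiff hu) N).sub (isSymm_hankelPart N _)
  exact ((posSemidef_triDiag N).isHermitian.commute_iff
    (isHermitian_iff_isSymm.mpr (isSymm_tauOf ht N))).mpr (isHermitian_iff_isSymm.mpr hsymm)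

end Tau

/-! ### Fractional stencils -/

/-- The sign pattern shared by the coefficients of discrete fractional Laplacians of order in
`(0, 2)`: an even sequence, nonpositive and increasing away from `0`, all of whose symmetric
partial sums are positive. -/
structure IsFractionalStencil (t : ℤ → ℝ) : Prop where
  even : t.Even
  nonpos : ∀ k, 0 < k → t k ≤ 0
  monotoneOn : MonotoneOn t (Set.Ioi 0)
  sum_Icc_pos : ∀ n : ℕ, 0 < ∑ k ∈ Finset.Icc (-n : ℤ) n, t k

namespace IsFractionalStencil

variable {N : ℕ} {t : ℤ → ℝ}

theorem apply_abs (ht : IsFractionalStencil t) (k : ℤ) : t |k| = t k := by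
  rcases abs_choice k with h | h <;> rw [h]
  exact ht.even k

theorem apply_nonpos (ht : IsFractionalStencil t) {k : ℤ} (hk : k ≠ 0) : t k ≤ 0 :=
  ht.apply_abs k ▸ ht.nonpos |k| (abs_pos.mpr hk)

theorem apply_le_apply_of_abs_le (ht : IsFractionalStencil t) {k l : ℤ} (hk : k ≠ 0)
    (hkl : |k| ≤ |l|) : t k ≤ t l := by
  have hk_pos := abs_pos.mpr hk
  rw [← ht.apply_abs k, ← ht.apply_abs l]
  exact ht.monotoneOn hk_pos (hk_pos.trans_le hkl) hkl

theorem sum_pos_of_zero_mem (ht : IsFractionalStencil t) {S : Finset ℤ} (hS : 0 ∈ S) :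
    0 < ∑ k ∈ S, t k := by
  set I := Finset.Icc (-(S.sup Int.natAbs : ℕ) : ℤ) (S.sup Int.natAbs : ℕ)
  have hSI : S ⊆ I := fun k hk ↦ by
    have := Finset.le_sup (f := Int.natAbs) hk
    simp only [I, Finset.mem_Icc]
    omega
  calc 0 < ∑ k ∈ I, t k := ht.sum_Icc_pos _
    _ = ∑ k ∈ I \ S, t k + ∑ k ∈ S, t k := (Finset.sum_sdiff hSI).symm
    _ ≤ ∑ k ∈ S, t k := add_le_of_nonpos_left <| Finset.sum_nonpos fun k hk ↦
        ht.apply_nonpos fun hk0 ↦ (Finset.mem_sdiff.mp hk).2 (hk0 ▸ hS)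

protected theorem truncate (ht : IsFractionalStencil t) (hN : 0 < N) :
    IsFractionalStencil (truncate N t) where
  even := even_truncate ht.even N
  nonpos k hk := by
    rw [truncate]
    split_ifs
    exacts [ht.nonpos k hk, le_rfl]
  monotoneOn k hk l hl hkl := by
    simp only [truncate]
    have := ht.monotoneOn hk hl hkl
    have := ht.nonpos k hk
    grind
  sum_Icc_pos n := by
    simp only [truncate]
    rw [← Finset.sum_filter]
    exact ht.sum_pos_of_zero_mem (by simp [hN])

theorem hankelPart_nonpos (ht : IsFractionalStencil t) (i j : Fin N) :
    hankelPart N t i j ≤ 0 :=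
  add_nonpos (ht.apply_nonpos (by grind)) (ht.apply_nonpos (by grind))

theorem toeplitz_le_hankelPart (ht : IsFractionalStencil t) (ht_zero : ∀ k : ℤ, N ≤ k → t k = 0)
    {i j : Fin N} (hij : i ≠ j) : toeplitz N t i j ≤ hankelPart N t i j := by
  have hne : (i : ℤ) - j ≠ 0 := by grind
  simp only [toeplitz, hankelPart, of_apply]
  rcases le_or_gt (N : ℤ) (i + j + 2) with h | h
  · rw [ht_zero _ h, zero_add]
    exact ht.apply_le_apply_of_abs_le hne (by grind)
  · rw [ht_zero (2 * N - i - j) (by grind), add_zero]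
    exact ht.apply_le_apply_of_abs_le hne (by grind)

-- The arguments of `t` in the `i`-th rows of the Toeplitz and Hankel parts are pairwise distinct
-- once the second Hankel term is reflected.
theorem sum_toeplitz_add_hankelPart_pos (ht : IsFractionalStencil t) (i : Fin N) :
    0 < ∑ j, (toeplitz N t i j + hankelPart N t i j) := by
  let φ : Fin N ⊕ Fin N ⊕ Fin N → ℤ :=
    Sum.elim (fun j ↦ i - j) (Sum.elim (fun j ↦ i + j + 2) fun j ↦ -(2 * N - i - j))
  have hφ : Function.Injective φ := by
    rintro (a | a | a) (b | b | b) h <;> simp only [φ, Sum.elim_inl, Sum.elim_inr] at h <;> grind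
  have hpos : 0 < ∑ p, t (φ p) := by
    rw [← Finset.sum_image fun a _ b _ h ↦ hφ h]
    exact ht.sum_pos_of_zero_mem (Finset.mem_image.mpr ⟨.inl i, Finset.mem_univ _, sub_self _⟩)
  simpa only [φ, Fintype.sum_sum_type, Sum.elim_inl, Sum.elim_inr, ht.even.eq, toeplitz,
    hankelPart, of_apply, Finset.sum_add_distrib] using hpos

theorem posDef_toeplitz_add_smul_hankelPart (ht : IsFractionalStencil t) (N : ℕ) {c : ℝ}
    (hc : c ∈ Set.Icc (-3) 1) :
    (toeplitz N t + c • hankelPart N (truncate N t)).PosDef := by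
  rw [← toeplitz_truncate]
  set u := truncate N t
  refine posDef_of_sum_row_lt_diag (isHermitian_iff_isSymm.mpr
    ((isSymm_toeplitz (even_truncate ht.even N) N).add ((isSymm_hankelPart N u).smul c)))
    fun i ↦ ?_
  have hu : IsFractionalStencil u := ht.truncate i.pos
  have hoff : ∀ j ∈ Finset.univ.erase i, ‖(toeplitz N u + c • hankelPart N u) i j‖ ≤
      -(toeplitz N u i j + hankelPart N u i j) := by
    intro j hj
    have hle := hu.toeplitz_le_hankelPart (fun k ↦ truncate_of_le) (Finset.ne_of_mem_erase hj).symm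
    have hnonpos := hu.hankelPart_nonpos i j
    rw [Matrix.add_apply, Matrix.smul_apply, smul_eq_mul, Real.norm_eq_abs, abs_le]
    constructor <;> nlinarith [hc.1, hc.2]
  have hrow := hu.sum_toeplitz_add_hankelPart_pos i
  rw [← Finset.add_sum_erase _ _ (Finset.mem_univ i)] at hrow
  calc ∑ j ∈ Finset.univ.erase i, ‖(toeplitz N u + c • hankelPart N u) i j‖
      ≤ -∑ j ∈ Finset.univ.erase i, (toeplitz N u i j + hankelPart N u i j) := by
        rw [← Finset.sum_neg_distrib]
        exact Finset.sum_le_sum hoff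
    _ < toeplitz N u i i + hankelPart N u i i := by linarith
    _ ≤ toeplitz N u i i + c * hankelPart N u i i := by
        nlinarith [hu.hankelPart_nonpos i i, hc.2]

end IsFractionalStencil

/-! ### Comparison of the preconditioner with the Toeplitz matrix -/

/-- The preconditioner `(1 + c T) τ(t)` of the Toeplitz matrix of `t + c • secondDiff t`. -/
noncomputable def tauPrecond (c : ℝ) (N : ℕ) (t : ℤ → ℝ) : Matrix (Fin N) (Fin N) ℝ :=
  (1 + c • triDiag N) * tauOf N fun m ↦ t m

namespace IsFractionalStencil

variable {c : ℝ} {t : ℤ → ℝ}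

theorem posDef_toeplitz (ht : IsFractionalStencil t) (N : ℕ) : (toeplitz N t).PosDef := by
  simpa using ht.posDef_toeplitz_add_smul_hankelPart N (c := 0) (by norm_num)

theorem posDef_tauOf (ht : IsFractionalStencil t) (N : ℕ) : (tauOf N fun m ↦ t m).PosDef := by
  rw [tauOf_eq_toeplitz_sub_hankelPart ht.even, sub_eq_add_neg, ← neg_one_smul ℝ]
  exact ht.posDef_toeplitz_add_smul_hankelPart N (by norm_num)

theorem posDef_two_smul_toeplitz_sub_tauOf (ht : IsFractionalStencil t) (N : ℕ) :
    ((2 : ℝ) • toeplitz N t - tauOf N fun m ↦ t m).PosDef := by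
  rw [tauOf_eq_toeplitz_sub_hankelPart ht.even]
  convert ht.posDef_toeplitz_add_smul_hankelPart N (c := 1) (by norm_num) using 1
  module

theorem posDef_three_smul_tauOf_sub_two_smul_toeplitz (ht : IsFractionalStencil t) (N : ℕ) :
    ((3 : ℝ) • (tauOf N fun m ↦ t m) - (2 : ℝ) • toeplitz N t).PosDef := by
  rw [tauOf_eq_toeplitz_sub_hankelPart ht.even]
  convert ht.posDef_toeplitz_add_smul_hankelPart N (c := -3) (by norm_num) using 1
  module

theorem posSemidef_tauPrecond_sub_tauOf (ht : IsFractionalStencil t) (hc : 0 ≤ c) (N : ℕ) :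
    (tauPrecond c N t - tauOf N fun m ↦ t m).PosSemidef := by
  have hsub : tauPrecond c N t - (tauOf N fun m ↦ t m) = c • (triDiag N * tauOf N fun m ↦ t m) := by
    rw [tauPrecond, add_mul, one_mul, smul_mul_assoc, add_sub_cancel_left]
  rw [hsub]
  exact (posSemidef_mul_of_commute (posSemidef_triDiag N) (ht.posDef_tauOf N).posSemidef
    (commute_triDiag_tauOf ht.even N)).smul hc

theorem posSemidef_smul_tauOf_sub_tauPrecond (ht : IsFractionalStencil t) (hc : 0 ≤ c) (N : ℕ) :
    ((1 + 4 * c) • (tauOf N fun m ↦ t m) - tauPrecond c N t).PosSemidef := by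
  have hcomm : Commute ((4 : ℝ) • 1 - triDiag N) (tauOf N fun m ↦ t m) :=
    ((Commute.one_left _).smul_left 4).sub_left (commute_triDiag_tauOf ht.even N)
  have hsub : (1 + 4 * c) • (tauOf N fun m ↦ t m) - tauPrecond c N t =
      c • (((4 : ℝ) • 1 - triDiag N) * tauOf N fun m ↦ t m) := by
    simp only [tauPrecond, add_mul, sub_mul, one_mul, smul_mul_assoc]
    module
  rw [hsub]
  exact (posSemidef_mul_of_commute (posSemidef_four_sub_triDiag N)
    (ht.posDef_tauOf N).posSemidef hcomm).smul hc

theorem posDef_tauPrecond (ht : IsFractionalStencil t) (hc : 0 ≤ c) (N : ℕ) :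
    (tauPrecond c N t).PosDef := by
  simpa using (ht.posDef_tauOf N).add_posSemidef (ht.posSemidef_tauPrecond_sub_tauOf hc N)

theorem posDef_smul_toeplitz_sub_tauPrecond (ht : IsFractionalStencil t) (hc : 0 ≤ c) (N : ℕ) :
    ((2 * (1 + 4 * c)) • toeplitz N (t + c • secondDiff t) - tauPrecond c N t).PosDef := by
  have hΔ := posSemidef_toeplitz_secondDiff (ht.posDef_toeplitz (N + 1)).posSemidef
  have hτ := ht.posDef_two_smul_toeplitz_sub_tauOf N
  have hP := ht.posSemidef_smul_tauOf_sub_tauPrecond hc N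
  convert ((hτ.smul (by positivity : 0 < 1 + 4 * c)).add_posSemidef hP).add_posSemidef
    (hΔ.smul (by positivity : 0 ≤ 2 * (1 + 4 * c) * c)) using 1
  rw [toeplitz_add_smul]
  module

theorem posDef_smul_tauPrecond_sub_toeplitz (ht : IsFractionalStencil t) (hc : 0 ≤ c) (N : ℕ) :
    ((3 * (1 + 4 * c)) • tauPrecond c N t -
      (2 : ℝ) • toeplitz N (t + c • secondDiff t)).PosDef := by
  have hΔ := posSemidef_four_smul_toeplitz_sub_secondDiff (ht.posDef_toeplitz (N + 1)).posSemidef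
  have hτ := ht.posDef_three_smul_tauOf_sub_two_smul_toeplitz N
  have hP := ht.posSemidef_tauPrecond_sub_tauOf hc N
  convert ((hτ.smul (by positivity : 0 < 1 + 4 * c)).add_posSemidef
    (hP.smul (by positivity : 0 ≤ 3 * (1 + 4 * c)))).add_posSemidef
    (hΔ.smul (by positivity : 0 ≤ 2 * c)) using 1
  rw [toeplitz_add_smul]
  module

end IsFractionalStencil

/-! ### The coefficients `g_k` and `s_k` -/

-- At the poles of `Γ` both sides vanish, by the convention `Γ = 0` there.
theorem inv_Gamma_eq_self_mul_inv_Gamma_add_one (s : ℝ) :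
    (Real.Gamma s)⁻¹ = s * (Real.Gamma (s + 1))⁻¹ := by
  rcases eq_or_ne s 0 with rfl | hs
  · simp
  · rw [Real.Gamma_add_one hs, mul_inv, mul_inv_cancel_left₀ hs]

section Coefficients

variable {γ : ℝ}

theorem even_gCoef (γ : ℝ) : (gCoef γ).Even := by
  intro k
  have hsign : (-1 : ℝ) ^ (-k) = (-1) ^ k := by rw [_root_.zpow_neg, ← _root_.inv_zpow]; norm_num
  simp only [gCoef, hsign]
  push_cast
  rw [sub_neg_eq_add, ← sub_eq_add_neg, mul_comm (Real.Gamma (γ / 2 + k + 1))]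

theorem gCoef_recurrence (γ : ℝ) (k : ℤ) :
    (γ / 2 + k + 1) * gCoef γ (k + 1) = (k - γ / 2) * gCoef γ k := by
  have hminus := inv_Gamma_eq_self_mul_inv_Gamma_add_one (γ / 2 - k)
  have hplus := inv_Gamma_eq_self_mul_inv_Gamma_add_one (γ / 2 + k + 1)
  simp only [gCoef, div_eq_mul_inv, mul_inv, zpow_add_one₀ (by norm_num : (-1 : ℝ) ≠ 0)]
  simp only [div_eq_mul_inv] at hminus hplus
  push_cast
  rw [show γ * 2⁻¹ - (k + 1) + 1 = γ * 2⁻¹ - k by ring, ← add_assoc (γ * 2⁻¹) (k : ℝ) 1, hminus,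
    hplus]
  ring

theorem gCoef_zero_pos (hγ : -1 < γ) : 0 < gCoef γ 0 := by
  have := Real.Gamma_pos_of_pos (s := γ + 1) (by linarith)
  have := Real.Gamma_pos_of_pos (s := γ / 2 + 1) (by linarith)
  simp only [gCoef, Int.cast_zero, sub_zero, add_zero, zpow_zero]
  positivity

theorem gCoef_neg_of_pos (hγ : γ ∈ Set.Ioo 0 2) {k : ℤ} (hk : 0 < k) : gCoef γ k < 0 := by
  have ⟨hγ0, hγ2⟩ := hγ
  induction k, hk using Int.leInduction with
  | base =>
    have hrec := gCoef_recurrence γ 0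
    have h0 := gCoef_zero_pos (show -1 < γ by linarith)
    norm_num at hrec ⊢
    nlinarith
  | succ k hk ih =>
    have hrec := gCoef_recurrence γ k
    have hk1 : (1 : ℝ) ≤ k := by exact_mod_cast hk
    nlinarith

theorem gCoef_le_gCoef_add_one (hγ : γ ∈ Set.Ioo 0 2) {k : ℤ} (hk : 0 < k) :
    gCoef γ k ≤ gCoef γ (k + 1) := by
  have hγ0 := hγ.1
  have hrec := gCoef_recurrence γ k
  have hneg := gCoef_neg_of_pos hγ hk
  have hk1 : (1 : ℝ) ≤ k := by exact_mod_cast hk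
  nlinarith

theorem mul_sum_Icc_gCoef (γ : ℝ) (n : ℕ) :
    γ * ∑ k ∈ Finset.Icc (-n : ℤ) n, gCoef γ k = (γ - 2 * n) * gCoef γ n := by
  induction n with
  | zero => simp
  | succ n ih =>
    have hrec := gCoef_recurrence γ n
    push_cast at hrec ⊢
    rw [Finset.sum_Icc_succ_eq_add_endpoints, even_gCoef, mul_add, ih]
    linear_combination 2 * hrec

theorem isFractionalStencil_gCoef (hγ : γ ∈ Set.Ioo 0 2) : IsFractionalStencil (gCoef γ) where
  even := even_gCoef γ
  nonpos k hk := (gCoef_neg_of_pos hγ hk).le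
  monotoneOn k hk l _ hkl := by
    induction l, hkl using Int.leInduction with
    | base => exact le_rfl
    | succ l hkl ih =>
      have hl : 0 < l := hk.trans_le hkl
      exact (ih hl).trans (gCoef_le_gCoef_add_one hγ hl)
  sum_Icc_pos n := by
    refine pos_of_mul_pos_right ?_ hγ.1.le
    rw [mul_sum_Icc_gCoef]
    rcases n.eq_zero_or_pos with rfl | hn
    · have := gCoef_zero_pos (show -1 < γ by linarith [hγ.1])
      simpa using mul_pos hγ.1 this
    · have hn1 : (1 : ℝ) ≤ n := by exact_mod_cast hn
      exact mul_pos_of_neg_of_neg (by linarith [hγ.2])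
        (gCoef_neg_of_pos hγ (by exact_mod_cast hn))

theorem sCoef_eq_gCoef_add_secondDiff {k : ℤ} (hminus : γ - 2 * k + 2 ≠ 0)
    (hplus : γ + 2 * k + 2 ≠ 0) :
    sCoef γ k = gCoef γ k + γ / 24 * secondDiff (gCoef γ) k := by
  have hnext : gCoef γ (k + 1) = (2 * k - γ) * gCoef γ k / (γ + 2 * k + 2) := by
    rw [eq_div_iff hplus]
    linear_combination 2 * gCoef_recurrence γ k
  have hprev : gCoef γ (k - 1) = -(2 * k + γ) * gCoef γ k / (γ - 2 * k + 2) := by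
    have hrec := gCoef_recurrence γ (k - 1)
    push_cast [sub_add_cancel] at hrec
    rw [eq_div_iff hminus]
    linear_combination 2 * hrec
  have hdef : sCoef γ k = gCoef γ k *
    (1 + γ * (γ + 1) * (γ + 2) / (6 * (γ - 2 * k + 2) * (γ + 2 * k + 2))) := rfl
  rw [hdef, secondDiff, hnext, hprev]
  field_simp
  ring

theorem add_two_mul_intCast_ne_zero (hγ : γ ∈ Set.Ioo 0 2) (m : ℤ) : γ + 2 * m ≠ 0 := by
  intro h
  have hlt : (-1 : ℝ) < m := by linarith [hγ.2]
  have hgt : (m : ℝ) < 0 := by linarith [hγ.1]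
  norm_cast at hlt hgt
  omega

theorem Amat_eq_toeplitz (hγ : γ ∈ Set.Ioo 0 2) (N : ℕ) :
    Amat γ N = toeplitz N (gCoef γ + (γ / 24) • secondDiff (gCoef γ)) := by
  ext i j
  have hminus := add_two_mul_intCast_ne_zero hγ (1 - (i - j))
  have hplus := add_two_mul_intCast_ne_zero hγ (1 + (i - j))
  exact sCoef_eq_gCoef_add_secondDiff (by convert hminus using 1; push_cast; ring)
    (by convert hplus using 1; push_cast; ring)

theorem Pmat_eq_tauPrecond (γ : ℝ) (N : ℕ) : Pmat γ N = tauPrecond (γ / 24) N (gCoef γ) :=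
  rfl

theorem posDef_Pmat (hγ : γ ∈ Set.Ioo 0 2) (N : ℕ) : (Pmat γ N).PosDef :=
  (isFractionalStencil_gCoef hγ).posDef_tauPrecond (by linarith [hγ.1]) N

theorem three_eighths_mul_Pmat_lt_Amat (hγ : γ ∈ Set.Ioo 0 2) {N : ℕ} {y : Fin N → ℝ}
    (hy : y ≠ 0) : 3 / 8 * (y ⬝ᵥ Pmat γ N *ᵥ y) < y ⬝ᵥ Amat γ N *ᵥ y := by
  have hlt := dotProduct_mulVec_lt_of_posDef_sub
    ((isFractionalStencil_gCoef hγ).posDef_smul_toeplitz_sub_tauPrecond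
      (c := γ / 24) (by linarith [hγ.1]) N) hy
  have hP : 0 < y ⬝ᵥ Pmat γ N *ᵥ y := (posDef_Pmat hγ N).dotProduct_mulVec_pos hy
  rw [← Amat_eq_toeplitz hγ, ← Pmat_eq_tauPrecond, smul_mulVec, dotProduct_smul,
    smul_eq_mul] at hlt
  have hA : 0 < y ⬝ᵥ Amat γ N *ᵥ y :=
    pos_of_mul_pos_right (hP.trans hlt) (by linarith [hγ.1])
  nlinarith [hγ.2]

theorem Amat_lt_two_mul_Pmat (hγ : γ ∈ Set.Ioo 0 2) {N : ℕ} {y : Fin N → ℝ}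
    (hy : y ≠ 0) : y ⬝ᵥ Amat γ N *ᵥ y < 2 * (y ⬝ᵥ Pmat γ N *ᵥ y) := by
  have hlt := dotProduct_mulVec_lt_of_posDef_sub
    ((isFractionalStencil_gCoef hγ).posDef_smul_tauPrecond_sub_toeplitz
      (c := γ / 24) (by linarith [hγ.1]) N) hy
  have hP : 0 < y ⬝ᵥ Pmat γ N *ᵥ y := (posDef_Pmat hγ N).dotProduct_mulVec_pos hy
  simp only [← Amat_eq_toeplitz hγ, ← Pmat_eq_tauPrecond, smul_mulVec, dotProduct_smul,
    smul_eq_mul] at hlt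
  nlinarith [hγ.2]

end Coefficients

theorem stmt_17_general {γ : ℝ} (hγ : γ ∈ Set.Ioo 0 2) (N : ℕ) :
    (Pmat γ N).IsSymm ∧ (Pmat γ N).PosDef ∧
    (∀ y : Fin N → ℝ, y ≠ 0 →
      (3 / 8) * (y ⬝ᵥ Pmat γ N *ᵥ y) < y ⬝ᵥ Amat γ N *ᵥ y ∧
      y ⬝ᵥ Amat γ N *ᵥ y < 2 * (y ⬝ᵥ Pmat γ N *ᵥ y)) ∧
    (∀ (μ : ℝ) (v : Fin N → ℝ), v ≠ 0 →
      ((Pmat γ N)⁻¹ * Amat γ N) *ᵥ v = μ • v → 3 / 8 < μ ∧ μ < 2) := by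
  have hP := posDef_Pmat hγ N
  have hlow (y : Fin N → ℝ) (hy : y ≠ 0) := three_eighths_mul_Pmat_lt_Amat hγ hy
  have hupp (y : Fin N → ℝ) (hy : y ≠ 0) := Amat_lt_two_mul_Pmat hγ hy
  exact ⟨isHermitian_iff_isSymm.mp hP.isHermitian, hP, fun y hy ↦ ⟨hlow y hy, hupp y hy⟩,
    fun μ v hv hμ ↦ eigenvalue_inv_mul_mem_Ioo hP hv hμ (hlow v hv) (hupp v hv)⟩

theorem stmt_17 (γ : ℝ) (hγ : γ ∈ Set.Ioo (1 : ℝ) 2) (N : ℕ) (hN : 1 ≤ N) :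
    (Pmat γ N).IsSymm ∧ (Pmat γ N).PosDef ∧
    (∀ y : Fin N → ℝ, y ≠ 0 →
      (3 / 8) * (y ⬝ᵥ Pmat γ N *ᵥ y) < y ⬝ᵥ Amat γ N *ᵥ y ∧
      y ⬝ᵥ Amat γ N *ᵥ y < 2 * (y ⬝ᵥ Pmat γ N *ᵥ y)) ∧
    (∀ (μ : ℝ) (v : Fin N → ℝ), v ≠ 0 →
      ((Pmat γ N)⁻¹ * Amat γ N) *ᵥ v = μ • v → 3 / 8 < μ ∧ μ < 2) :=
  stmt_17_general ⟨zero_lt_one.trans hγ.1, hγ.2⟩ N
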